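/- arXiv:1509.02898 — 2 statements merged into one kernel-verified Lean document; each statement's English description precedes it below -/
import Mathlib

section
/- Let k, m be positive integers and let e ≥ 0 be an integer with m + k ≤ 2^{e+1}. Then for every i with 1 ≤ i ≤ k, the element z_i = x_i ⊗ 1 + 1 ⊗ x_i of R(k,m) ⊗ R(k,m) satisfies z_i^{2^{e+1}} = 0. -/
/-!
Since `2 = 0`, raising to the power `2 ^ (e + 1)` is additive, so it suffices that
`x_j ^ (m + k) = 0` in `R(k,m)`.

The recurrence `h_{d+1}(x, l) = h_{d+1}(l) + x h_d(x, l)` does all the work. Used upwards, it shows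
that `h_d(x_1, …, x_n) = 0` in `R(k,m)` for every `n ≤ k` and every `d ≥ m + k + 1 - n`, not only
for the generators `d = m + k + 1 - n` (`completeHomog_take_eq_zero`). Used downwards, it removes
variables: if `h_d(x, l) = 0` for all `d ≥ D`, then discarding the members of `l` one by one, each at
the cost of raising `D` by one, gives `x ^ d = h_d(x) = 0` for all `d ≥ D + |l|`
(`pow_eq_zero_of_completeHomog`). With `l = (x_1, …, x_{n-1})` and `x = x_n`, the bound
`D + |l|` is `m + k`.
-/

open scoped TensorProduct

/-- Complete homogeneous symmetric polynomial of degree `d` in a list of elements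
of a commutative (semi)ring: `h_d(l)`. -/
noncomputable def completeHomog {R : Type*} [CommSemiring R] : List R → ℕ → R
  | [], 0 => 1
  | [], _ + 1 => 0
  | x :: l, d => ∑ t ∈ Finset.range (d + 1), x ^ t * completeHomog l (d - t)

/-- Elementary symmetric polynomial of degree `d` in a list of elements: `e_d(l)`. -/
noncomputable def elemSymm {R : Type*} [CommSemiring R] : List R → ℕ → R
  | _, 0 => 1
  | [], _ + 1 => 0
  | x :: l, d + 1 => elemSymm l (d + 1) + x * elemSymm l d

/-- The ideal of `(ZMod 2)[x_1, …, x_k]` generated by the complete homogeneous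
symmetric polynomials `h_{m+i}(x_1, …, x_{k+1-i})` for `1 ≤ i ≤ k`. -/
noncomputable def flagIdeal (k m : ℕ) : Ideal (MvPolynomial (Fin k) (ZMod 2)) :=
  Ideal.span { p | ∃ i : ℕ, 1 ≤ i ∧ i ≤ k ∧
    p = completeHomog (((List.finRange k).take (k + 1 - i)).map MvPolynomial.X) (m + i) }

/-- `R(k,m)`, the quotient of `(ZMod 2)[x_1, …, x_k]` by `flagIdeal k m`;
this is the mod-2 cohomology ring of the real flag manifold `F(1^k, m)`. -/
abbrev FlagRing (k m : ℕ) : Type :=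
  MvPolynomial (Fin k) (ZMod 2) ⧸ flagIdeal k m

/-- The image of the variable `x_{j+1}` in `R(k,m)` (`j` is 0-indexed). -/
noncomputable def xGen (k m : ℕ) (j : Fin k) : FlagRing k m :=
  Ideal.Quotient.mk (flagIdeal k m) (MvPolynomial.X j)

/-- The zero-divisor `z_{j+1} = x_{j+1} ⊗ 1 + 1 ⊗ x_{j+1}` in `R(k,m) ⊗ R(k,m)`. -/
noncomputable def zGen (k m : ℕ) (j : Fin k) :
    FlagRing k m ⊗[ZMod 2] FlagRing k m :=
  xGen k m j ⊗ₜ 1 + 1 ⊗ₜ xGen k m j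

/-- `x_{i+1,j+1}` in the `s`-fold tensor power `R(k,m)^{⊗ s}`: the element having
`x_{j+1}` in the `(i+1)`-st tensor factor and `1` elsewhere (`i`, `j` 0-indexed). -/
noncomputable def xT (k m s : ℕ) (i : Fin s) (j : Fin k) :
    ⨂[ZMod 2] _ : Fin s, FlagRing k m :=
  PiTensorProduct.tprod (ZMod 2) (fun t => if t = i then xGen k m j else 1)

/-- The `s`-th zero-divisor `z_{i+1,j+1} = x_{1,j+1} + x_{i+1,j+1}` in `R(k,m)^{⊗ s}`. -/
noncomputable def zT (k m s : ℕ) (hs : 0 < s) (i : Fin s) (j : Fin k) :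
    ⨂[ZMod 2] _ : Fin s, FlagRing k m :=
  xT k m s ⟨0, hs⟩ j + xT k m s i j

lemma completeHomog_zero {R : Type*} [CommSemiring R] (l : List R) : completeHomog l 0 = 1 := by
  induction l with
  | nil => simp [completeHomog]
  | cons x l ih => simp [completeHomog, ih]

lemma completeHomog_cons_succ {R : Type*} [CommSemiring R] (x : R) (l : List R) (d : ℕ) :
    completeHomog (x :: l) (d + 1) = completeHomog l (d + 1) + x * completeHomog (x :: l) d := by
  simp only [completeHomog]
  rw [Finset.sum_range_succ', Finset.mul_sum, add_comm]
  congr 1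
  · simp
  · refine Finset.sum_congr rfl fun t _ => ?_
    rw [Nat.add_sub_add_right, pow_succ']
    ring

/-- Both sides satisfy the recurrence
`a_{d+2} = h_{d+2}(l) + (x + y) a_{d+1} - x y a_d`, which is symmetric in `x` and `y`. -/
lemma completeHomog_swap {R : Type*} [CommRing R] (x y : R) (l : List R) (d : ℕ) :
    completeHomog (x :: y :: l) d = completeHomog (y :: x :: l) d := by
  induction d using Nat.strong_induction_on with
  | _ d ih =>
    match d with
    | 0 => simp only [completeHomog_zero]
    | 1 => simp only [completeHomog_cons_succ _ _ 0, completeHomog_zero]; ring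
    | d + 2 =>
      have h0 := ih d (by omega)
      have h1 := ih (d + 1) (by omega)
      have hx := completeHomog_cons_succ x (y :: l) d
      have hy := completeHomog_cons_succ y (x :: l) d
      rw [completeHomog_cons_succ x (y :: l) (d + 1), completeHomog_cons_succ y (x :: l) (d + 1),
        completeHomog_cons_succ x l (d + 1), completeHomog_cons_succ y l (d + 1)]
      linear_combination (-y) * hx + x * hy + (x + y) * h1 - x * y * h0

lemma completeHomog_perm {R : Type*} [CommRing R] {l l' : List R} (h : l.Perm l') :
    ∀ d, completeHomog l d = completeHomog l' d := by
  induction h with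
  | nil => exact fun _ => rfl
  | cons x _ ih => intro d; simp only [completeHomog, ih]
  | swap x y l => exact completeHomog_swap y x l
  | trans _ _ ih₁ ih₂ => exact fun d => (ih₁ d).trans (ih₂ d)

lemma map_completeHomog {R S : Type*} [CommSemiring R] [CommSemiring S] (f : R →+* S)
    (l : List R) : ∀ d, f (completeHomog l d) = completeHomog (l.map f) d := by
  induction l with
  | nil => intro d; cases d <;> simp [completeHomog]
  | cons x l ih => intro d; simp [completeHomog, ih]

lemma pow_eq_zero_of_completeHomog {R : Type*} [CommRing R] (x : R) (l : List R) :
    ∀ D : ℕ, (∀ d, D ≤ d → completeHomog (x :: l) d = 0) → ∀ d, D + l.length ≤ d → x ^ d = 0 := by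
  induction l with
  | nil =>
    intro D h d hd
    have key : ∀ d, completeHomog [x] d = x ^ d := by
      intro d
      induction d with
      | zero => simp [completeHomog_zero]
      | succ d ih => rw [completeHomog_cons_succ, ih, pow_succ']; simp [completeHomog]
    rw [← key]
    exact h d (by simpa using hd)
  | cons y l ih =>
    intro D h d hd
    refine ih (D + 1) (fun d hd => ?_) d (by simp at hd; omega)
    obtain ⟨d, rfl⟩ : ∃ c, d = c + 1 := ⟨d - 1, by omega⟩
    have h1 := completeHomog_cons_succ y (x :: l) d
    rw [completeHomog_swap y x l (d + 1), completeHomog_swap y x l d, h _ (by omega),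
      h _ (by omega)] at h1
    simpa using h1.symm

/-- The list `x_1, …, x_n` in `R(k,m)` (truncated to all `k` variables if `n > k`). -/
noncomputable def xList (k m n : ℕ) : List (FlagRing k m) :=
  ((List.finRange k).take n).map (xGen k m)

lemma xList_succ_perm (k m n : ℕ) (hn : n < k) :
    (xList k m (n + 1)).Perm (xGen k m ⟨n, hn⟩ :: xList k m n) := by
  have : xList k m (n + 1) = xList k m n ++ [xGen k m ⟨n, hn⟩] := by
    unfold xList
    rw [List.take_succ_eq_append_getElem (by simpa using hn)]
    simp
  rw [this]
  exact List.perm_append_singleton _ _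

/-- The vanishing of the generators of `flagIdeal k m`, indexed by the number `n + 1` of
variables involved. -/
lemma completeHomog_gen_eq_zero (k m n : ℕ) (hn : n < k) :
    completeHomog (xList k m (n + 1)) (m + k - n) = 0 := by
  have hmem : completeHomog (((List.finRange k).take (n + 1)).map MvPolynomial.X) (m + k - n)
      ∈ flagIdeal k m := by
    refine Ideal.subset_span ⟨k - n, by omega, by omega, ?_⟩
    rw [show k + 1 - (k - n) = n + 1 by omega, show m + (k - n) = m + k - n by omega]
  have h := Ideal.Quotient.eq_zero_iff_mem.mpr hmem
  rw [map_completeHomog, List.map_map] at h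
  exact h

lemma completeHomog_take_eq_zero (k m n : ℕ) (hn : n ≤ k) :
    ∀ d, m + k + 1 - n ≤ d → completeHomog (xList k m n) d = 0 := by
  induction n with
  | zero =>
    intro d hd
    obtain ⟨d, rfl⟩ : ∃ c, d = c + 1 := ⟨d - 1, by omega⟩
    simp [xList, completeHomog]
  | succ n ih =>
    intro d hd
    rw [show m + k + 1 - (n + 1) = m + k - n by omega] at hd
    induction d, hd using Nat.le_induction with
    | base => exact completeHomog_gen_eq_zero k m n hn
    | succ d hd ihd =>
      rw [completeHomog_perm (xList_succ_perm k m n hn)] at ihd ⊢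
      rw [completeHomog_cons_succ, ihd, ih (by omega) (d + 1) (by omega)]
      simp

lemma xGen_pow_eq_zero (k m : ℕ) (j : Fin k) (d : ℕ) (hd : m + k ≤ d) : xGen k m j ^ d = 0 := by
  obtain ⟨n, hn⟩ := j
  refine pow_eq_zero_of_completeHomog _ (xList k m n) (m + k - n) (fun c hc => ?_) d ?_
  · rw [← completeHomog_perm (xList_succ_perm k m n hn)]
    exact completeHomog_take_eq_zero k m (n + 1) hn c (by omega)
  · have : (xList k m n).length = n := by simp [xList]; omega
    omega

/-- Additivity of the iterated Frobenius; assuming `2 = 0` instead of `CharP A 2` allows `A` to be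
the zero ring. -/
lemma add_pow_two_pow {A : Type*} [CommRing A] (h2 : (2 : A) = 0) (a b : A) (n : ℕ) :
    (a + b) ^ 2 ^ n = a ^ 2 ^ n + b ^ 2 ^ n := by
  induction n with
  | zero => simp
  | succ n ih =>
    rw [pow_succ, pow_mul, pow_mul, pow_mul, ih]
    linear_combination (a ^ 2 ^ n * b ^ 2 ^ n) * h2

lemma tmul_add_tmul_pow_eq_zero {A : Type*} [CommRing A] [Algebra (ZMod 2) A] (x : A) (n : ℕ)
    (hx : x ^ 2 ^ n = 0) :
    (x ⊗ₜ[ZMod 2] (1 : A) + (1 : A) ⊗ₜ[ZMod 2] x) ^ 2 ^ n = 0 := by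
  have h2 : (2 : A ⊗[ZMod 2] A) = 0 := by
    rw [← map_ofNat (algebraMap (ZMod 2) (A ⊗[ZMod 2] A)) 2,
      show (OfNat.ofNat 2 : ZMod 2) = 0 from rfl, map_zero]
  rw [add_pow_two_pow h2, Algebra.TensorProduct.tmul_pow, Algebra.TensorProduct.tmul_pow,
    hx, TensorProduct.zero_tmul, TensorProduct.tmul_zero, add_zero]

/-- if `m + k ≤ 2^{e+1}`, then `z_i^{2^{e+1}} = 0` in `R(k,m) ⊗ R(k,m)`
for every `1 ≤ i ≤ k`. -/
theorem statement11 (k m e : ℕ) (hk : 0 < k) (hm : 0 < m) (h : m + k ≤ 2 ^ (e + 1)) :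
    ∀ j : Fin k, zGen k m j ^ (2 ^ (e + 1)) = 0 := by
  intro j
  exact tmul_add_tmul_pow_eq_zero _ _ (xGen_pow_eq_zero k m j _ h)
end

section
/- Let s ≥ 3 and e ≥ 1 be integers. In R(2,2^e−1)^{⊗s}, the element (z_{2,1}^{2^{e+1}−1} · z_{2,2}^{2^{e+1}−2}) · (z_{3,1}^{2^e−1} · z_{3,2}^{2^e+1}) · ∏_{i=4}^{s} (z_{i,1}^{2^e} · z_{i,2}^{2^e−1}) is nonzero (the product over 4 ≤ i ≤ s being empty if s = 3). -/
/-!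
Write `N = 2 ^ e`, and `x = x_1`, `y = x_2` in `R(2, N - 1)`, where the relations are
`h_N(x, y) = 0` and `x ^ (N + 1) = 0`. The sum of the coefficients of `x ^ N * y ^ (N - 1)` and
`x ^ (N - 1) * y ^ N` vanishes on the ideal of relations (`topCoeff_flagIdeal`), so it defines a
functional `φ` on `R(2, N - 1)` (`topClass`), the evaluation on the fundamental class. The given
element is shown to be nonzero by showing that `φ ⊗ ⋯ ⊗ φ` takes the value `1` on it.

The element is a product, over `i ≥ 2`, of factors `z_{i,1} ^ p * z_{i,2} ^ q` that involve only the
tensor factors `1` and `i`. Hence one may contract each of them with `φ` in the tensor factor `i`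
and apply `φ` to the product of the results (`tensorFunctional_prod`). The contraction is
`C(p, N) C(q, N-1) x^(p-N) y^(q-N+1) + C(p, N-1) C(q, N) x^(p-N+1) y^(q-N)`
(`contracted_factor`). Modulo 2 this gives

* for `i = 2`: `x ^ N * y ^ (N - 2)`, because `C(2N-2, N-1)` is even while `C(2N-1, N-1)` and
  `C(2N-2, N)` are odd;
* for `i = 3`: `y`, because `C(N-1, N) = 0` and `C(N+1, N) = N + 1` is odd;
* for `i ≥ 4`: `1`.

The product of the contractions is `x ^ N * y ^ (N - 1)`, on which `φ` is `1`.
-/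

open scoped TensorProduct

/-! ### The top-degree functional on `R(2, N - 1)` -/

/-- The functional on `(ZMod 2)[x, y]` summing the coefficients of `x ^ N * y ^ (N - 1)` and
`x ^ (N - 1) * y ^ N`. -/
noncomputable def topCoeff (N : ℕ) : MvPolynomial (Fin 2) (ZMod 2) →ₗ[ZMod 2] ZMod 2 :=
  MvPolynomial.lcoeff (ZMod 2) (Finsupp.single 0 N + Finsupp.single 1 (N - 1)) +
    MvPolynomial.lcoeff (ZMod 2) (Finsupp.single 0 (N - 1) + Finsupp.single 1 N)

lemma single_add_single_eq_iff (a b c d : ℕ) :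
    (Finsupp.single 0 a + Finsupp.single 1 b : Fin 2 →₀ ℕ) =
      Finsupp.single 0 c + Finsupp.single 1 d ↔ a = c ∧ b = d := by
  constructor
  · intro h
    exact ⟨by simpa using DFunLike.congr_fun h 0, by simpa using DFunLike.congr_fun h 1⟩
  · rintro ⟨rfl, rfl⟩; rfl

lemma topCoeff_monomial (N a b : ℕ) :
    topCoeff N (MvPolynomial.X 0 ^ a * MvPolynomial.X 1 ^ b) =
      (if a = N ∧ b = N - 1 then 1 else 0) + (if a = N - 1 ∧ b = N then 1 else 0) := by
  simp only [topCoeff, MvPolynomial.X_pow_eq_monomial, MvPolynomial.monomial_mul,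
    LinearMap.add_apply, MvPolynomial.lcoeff_apply, MvPolynomial.coeff_monomial,
    single_add_single_eq_iff, one_mul]

/-- Vanishing of `topCoeff` on the ideal generated by `g` need only be tested on monomial
multiples of `g`. -/
lemma topCoeff_mul_eq_zero (N : ℕ) (g : MvPolynomial (Fin 2) (ZMod 2))
    (hg : ∀ a b, topCoeff N (MvPolynomial.X 0 ^ a * MvPolynomial.X 1 ^ b * g) = 0)
    (r : MvPolynomial (Fin 2) (ZMod 2)) : topCoeff N (r * g) = 0 := by
  induction r using MvPolynomial.induction_on' with
  | monomial u c =>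
    have : MvPolynomial.monomial u c =
        c • (MvPolynomial.X 0 ^ u 0 * MvPolynomial.X 1 ^ u 1 :
          MvPolynomial (Fin 2) (ZMod 2)) := by
      rw [MvPolynomial.monomial_eq, Finsupp.prod_fintype _ _ (by simp), Fin.prod_univ_two,
        MvPolynomial.smul_eq_C_mul]
    rw [this, smul_mul_assoc, map_smul, hg, smul_zero]
  | add p q hp hq => rw [add_mul, map_add, hp, hq, add_zero]

/-- `topCoeff` kills the monomial multiples of `h_N(x, y)`: in the relevant degree `a + b = N - 1`,
the product contains each of the two monomials read off by `topCoeff` exactly once, and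
`1 + 1 = 0`. -/
lemma topCoeff_homog_mul (N : ℕ) (hN : 1 ≤ N) (a b : ℕ) :
    topCoeff N (MvPolynomial.X 0 ^ a * MvPolynomial.X 1 ^ b *
      ∑ t ∈ Finset.range (N + 1), MvPolynomial.X 0 ^ t * MvPolynomial.X 1 ^ (N - t)) = 0 := by
  have h1 : ∀ t, (MvPolynomial.X 0 ^ a * MvPolynomial.X 1 ^ b *
      (MvPolynomial.X 0 ^ t * MvPolynomial.X 1 ^ (N - t)) : MvPolynomial (Fin 2) (ZMod 2)) =
      MvPolynomial.X 0 ^ (a + t) * MvPolynomial.X 1 ^ (b + (N - t)) := by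
    intro t; ring
  simp only [Finset.mul_sum, h1, map_sum, topCoeff_monomial]
  by_cases hab : a + b = N - 1
  · rw [Finset.sum_add_distrib, Finset.sum_eq_single (N - a), Finset.sum_eq_single (N - 1 - a),
      if_pos (by omega), if_pos (by omega)]
    · decide
    · intro t ht hne
      rw [Finset.mem_range] at ht
      exact if_neg (by omega)
    · intro h; simp at h; omega
    · intro t ht hne
      rw [Finset.mem_range] at ht
      exact if_neg (by omega)
    · intro h; simp at h
  · refine Finset.sum_eq_zero fun t ht => ?_
    rw [Finset.mem_range] at ht
    rw [if_neg (by omega), if_neg (by omega), add_zero]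

lemma topCoeff_flagIdeal (N : ℕ) (hN : 1 ≤ N) (p : MvPolynomial (Fin 2) (ZMod 2))
    (hp : p ∈ flagIdeal 2 (N - 1)) : topCoeff N p = 0 := by
  suffices h : ∀ r, topCoeff N (r * p) = 0 by simpa using h 1
  refine Submodule.span_induction (p := fun p _ => ∀ r, topCoeff N (r * p) = 0)
    ?_ (by simp) ?_ ?_ hp
  · rintro g ⟨i, hi1, hi2, rfl⟩
    apply topCoeff_mul_eq_zero
    intro a b
    obtain rfl | rfl : i = 1 ∨ i = 2 := by omega
    · have : completeHomog (((List.finRange 2).take (2 + 1 - 1)).map MvPolynomial.X) (N - 1 + 1) =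
          (∑ t ∈ Finset.range (N + 1), MvPolynomial.X 0 ^ t * MvPolynomial.X 1 ^ (N - t) :
            MvPolynomial (Fin 2) (ZMod 2)) := by
        rw [Nat.sub_add_cancel hN]
        simp only [List.finRange_succ, List.finRange_zero, List.map_nil, List.map_cons]
        simp only [Nat.add_one_sub_one, List.take_succ_cons, List.take_zero, List.map_cons,
          List.map_nil, completeHomog]
        refine Finset.sum_congr rfl fun t ht => ?_
        congr 1
        rw [Finset.sum_eq_single (N - t)]
        · simp [completeHomog]
        · intro u hu hne
          rw [Finset.mem_range] at hu
          obtain ⟨v, hv⟩ : ∃ v, N - t - u = v + 1 := ⟨N - t - u - 1, by omega⟩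
          rw [hv]; simp [completeHomog]
        · simp
      rw [this]
      exact topCoeff_homog_mul N hN a b
    · have : completeHomog (((List.finRange 2).take (2 + 1 - 2)).map MvPolynomial.X) (N - 1 + 2) =
          (MvPolynomial.X 0 ^ (N + 1) : MvPolynomial (Fin 2) (ZMod 2)) := by
        rw [show N - 1 + 2 = N + 1 by omega]
        simp only [List.finRange_succ, List.finRange_zero, List.map_nil, List.map_cons]
        simp only [Nat.reduceAdd, Nat.reduceSub, List.take_succ_cons, List.take_zero,
          List.map_cons, List.map_nil, completeHomog]
        rw [Finset.sum_eq_single (N + 1)]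
        · simp [completeHomog]
        · intro u hu hne
          rw [Finset.mem_range] at hu
          obtain ⟨v, hv⟩ : ∃ v, N + 1 - u = v + 1 := ⟨N + 1 - u - 1, by omega⟩
          rw [hv]; simp [completeHomog]
        · simp
      rw [this, show (MvPolynomial.X 0 ^ a * MvPolynomial.X 1 ^ b * MvPolynomial.X 0 ^ (N + 1) :
        MvPolynomial (Fin 2) (ZMod 2)) = MvPolynomial.X 0 ^ (a + (N + 1)) * MvPolynomial.X 1 ^ b
        by ring, topCoeff_monomial, if_neg (by omega), if_neg (by omega), add_zero]
  · intro x y _ _ hx hy r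
    rw [mul_add, map_add, hx, hy, add_zero]
  · intro c x _ hx r
    rw [smul_eq_mul, ← mul_assoc]
    exact hx _

/-- The functional on `R(2, N - 1)` induced by `topCoeff`: evaluation of the top-degree part on the
mod-2 fundamental class of the flag manifold. -/
noncomputable def topClass (N : ℕ) (hN : 1 ≤ N) : FlagRing 2 (N - 1) →ₗ[ZMod 2] ZMod 2 :=
  ((flagIdeal 2 (N - 1)).restrictScalars (ZMod 2)).liftQ (topCoeff N)
    (fun p hp => topCoeff_flagIdeal N hN p hp)

lemma topClass_monomial (N : ℕ) (hN : 1 ≤ N) (a b : ℕ) :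
    topClass N hN (xGen 2 (N - 1) 0 ^ a * xGen 2 (N - 1) 1 ^ b) =
      (if a = N ∧ b = N - 1 then 1 else 0) + (if a = N - 1 ∧ b = N then 1 else 0) := by
  rw [← topCoeff_monomial]
  rfl

/-! ### Evaluating functionals on tensor powers -/

section TensorPower

variable {R A : Type*} [CommRing R] [CommRing A] [Algebra R A]

/-- The functional `φ ⊗ ⋯ ⊗ φ` on `A^{⊗ (n + 1)}`. -/
noncomputable def tensorFunctional (φ : A →ₗ[R] R) (n : ℕ) : (⨂[R] _ : Fin (n + 1), A) →ₗ[R] R :=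
  PiTensorProduct.lift ((MultilinearMap.mkPiAlgebra R (Fin (n + 1)) R).compLinearMap fun _ => φ)

lemma tensorFunctional_tprod (φ : A →ₗ[R] R) (n : ℕ) (f : Fin (n + 1) → A) :
    tensorFunctional φ n (PiTensorProduct.tprod R f) = ∏ i, φ (f i) := by
  simp [tensorFunctional]

/-- The inclusion of `A` as the `i`-th tensor factor of `A^{⊗ s}`. -/
noncomputable def inj (R : Type*) {A : Type*} [CommRing R] [CommRing A] [Algebra R A] (s : ℕ)
    (i : Fin s) : A →ₐ[R] ⨂[R] _ : Fin s, A :=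
  PiTensorProduct.singleAlgHom (R := R) (A := fun _ : Fin s => A) i

lemma inj_apply (s : ℕ) (i : Fin s) (a : A) :
    inj R s i a = PiTensorProduct.tprod R (fun t => if t = i then a else 1) := by
  simp only [inj, PiTensorProduct.singleAlgHom_apply]
  congr 1
  ext t
  by_cases h : t = i
  · subst h; simp
  · simp [h]

lemma inj_zero_mul_prod (n : ℕ) (u : A) (v : Fin n → A) :
    inj R (n + 1) 0 u * ∏ i, inj R (n + 1) i.succ (v i) =
      PiTensorProduct.tprod R (Fin.cons u v : Fin (n + 1) → A) := by
  have : ∀ w : Fin (n + 1) → A, ∏ i, inj R (n + 1) i (w i) = PiTensorProduct.tprod R w := by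
    intro w
    simp only [inj_apply, ← PiTensorProduct.tprod_prod]
    congr 1
    ext t
    simp [Finset.prod_apply]
  rw [← this, Fin.prod_univ_succ]
  simp

/-- If the `i`-th element of a family involves only the tensor factors `0` and `i + 1`, then
`φ ⊗ ⋯ ⊗ φ` can be evaluated on the product of the family by first contracting each element with
`φ` in the factor `i + 1`, and then applying `φ` to the product of the resulting elements of `A`. -/
lemma tensorFunctional_prod {κ : Type*} (φ : A →ₗ[R] R) (n : ℕ) (K : Fin n → Finset κ)
    (u v : Fin n → κ → A) :
    tensorFunctional φ n (∏ i, ∑ k ∈ K i, inj R (n + 1) 0 (u i k) * inj R (n + 1) i.succ (v i k)) =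
      φ (∏ i, ∑ k ∈ K i, φ (v i k) • u i k) := by
  rw [Finset.prod_univ_sum, Finset.prod_univ_sum, map_sum, map_sum]
  refine Finset.sum_congr rfl fun p _ => ?_
  rw [Finset.prod_mul_distrib, ← map_prod, inj_zero_mul_prod, tensorFunctional_tprod, Fin.prod_univ_succ,
    Finset.prod_smul, map_smul, smul_eq_mul, mul_comm]
  simp

lemma add_pow_mul_add_pow (s : ℕ) (i j : Fin s) (x y : A) (p q : ℕ) :
    (inj R s i x + inj R s j x) ^ p * (inj R s i y + inj R s j y) ^ q =
      ∑ k ∈ Finset.range (p + 1) ×ˢ Finset.range (q + 1),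
        inj R s i ((p.choose k.1 * q.choose k.2 : ℕ) • (x ^ (p - k.1) * y ^ (q - k.2))) *
          inj R s j (x ^ k.1 * y ^ k.2) := by
  rw [add_comm (inj R s i x), add_comm (inj R s i y), add_pow, add_pow, Finset.sum_mul_sum, Finset.sum_product]
  refine Finset.sum_congr rfl fun c _ => Finset.sum_congr rfl fun d _ => ?_
  simp only [map_mul, map_pow, map_natCast, nsmul_eq_mul, Nat.cast_mul]
  ring

end TensorPower

/-! ### Contraction of one factor, and parities of binomial coefficients -/

/-- The contraction of `(x₀ + x_i) ^ p * (y₀ + y_i) ^ q` in the `i`-th tensor factor against the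
fundamental class. Natural subtraction is harmless: the binomial coefficient vanishes whenever an
exponent on the right truncates. -/
lemma contracted_factor (N : ℕ) (hN : 1 ≤ N) (p q : ℕ) :
    ∑ k ∈ Finset.range (p + 1) ×ˢ Finset.range (q + 1),
      topClass N hN (xGen 2 (N - 1) 0 ^ k.1 * xGen 2 (N - 1) 1 ^ k.2) •
        ((p.choose k.1 * q.choose k.2 : ℕ) •
          (xGen 2 (N - 1) 0 ^ (p - k.1) * xGen 2 (N - 1) 1 ^ (q - k.2))) =
      ((p.choose N * q.choose (N - 1) : ℕ) : ZMod 2) •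
          (xGen 2 (N - 1) 0 ^ (p - N) * xGen 2 (N - 1) 1 ^ (q - (N - 1))) +
        ((p.choose (N - 1) * q.choose N : ℕ) : ZMod 2) •
          (xGen 2 (N - 1) 0 ^ (p - (N - 1)) * xGen 2 (N - 1) 1 ^ (q - N)) := by
  have key : ∀ (a b : ℕ) (f : ℕ → ℕ → FlagRing 2 (N - 1)),
      ∑ k ∈ Finset.range (p + 1) ×ˢ Finset.range (q + 1),
        (if k.1 = a ∧ k.2 = b then (1 : ZMod 2) else 0) •
          ((p.choose k.1 * q.choose k.2 : ℕ) • f k.1 k.2) =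
      ((p.choose a * q.choose b : ℕ) : ZMod 2) • f a b := by
    intro a b f
    rw [Finset.sum_eq_single (a, b)]
    · rw [if_pos ⟨rfl, rfl⟩, one_smul, Nat.cast_smul_eq_nsmul]
    · rintro ⟨c, d⟩ _ hne
      rw [if_neg (by simpa using hne), zero_smul]
    · intro h
      have : p.choose a * q.choose b = 0 := by
        simp only [Finset.mem_product, Finset.mem_range, not_and_or, not_lt] at h
        rcases h with h | h
        · rw [Nat.choose_eq_zero_of_lt h, zero_mul]
        · rw [Nat.choose_eq_zero_of_lt h, mul_zero]
      simp [this]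
  simp only [topClass_monomial, add_smul, Finset.sum_add_distrib]
  rw [key N (N - 1) fun c d => xGen 2 (N - 1) 0 ^ (p - c) * xGen 2 (N - 1) 1 ^ (q - d),
    key (N - 1) N fun c d => xGen 2 (N - 1) 0 ^ (p - c) * xGen 2 (N - 1) 1 ^ (q - d)]

lemma odd_choose_two_pow_sub_one (e a : ℕ) (ha : a < 2 ^ e) : Odd ((2 ^ e - 1).choose a) := by
  induction a with
  | zero => simp
  | succ a ih =>
    have h1 := ih (by omega)
    have h2 : Even ((2 ^ e).choose (a + 1)) :=
      even_iff_two_dvd.2 (Nat.prime_two.dvd_choose_pow (by omega) (by omega))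
    rw [show 2 ^ e = 2 ^ e - 1 + 1 by omega, Nat.choose_succ_succ, Nat.even_add'] at h2
    exact h2.1 h1

lemma even_choose_two_pow_sub_two (e : ℕ) (he : 1 ≤ e) :
    Even ((2 ^ (e + 1) - 2).choose (2 ^ e - 1)) := by
  have h : 2 ^ e = (2 ^ e - 1) + 1 := by have := Nat.one_le_two_pow (n := e); omega
  have : 2 ^ (e + 1) - 2 = 2 * (2 ^ e - 1) := by rw [pow_succ]; omega
  rw [this, ← Nat.centralBinom_eq_two_mul_choose]
  refine even_iff_two_dvd.2 (Nat.two_dvd_centralBinom_of_one_le ?_)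
  have : 2 ^ 1 ≤ 2 ^ e := Nat.pow_le_pow_right (by norm_num) he
  omega

lemma odd_choose_two_pow_sub_two (e : ℕ) (he : 1 ≤ e) :
    Odd ((2 ^ (e + 1) - 2).choose (2 ^ e)) := by
  have hN : 1 ≤ 2 ^ e := Nat.one_le_two_pow
  have hdouble : 2 ^ (e + 1) = 2 * 2 ^ e := by ring
  have h := odd_choose_two_pow_sub_one (e + 1) (2 ^ e - 1 + 1) (by omega)
  rw [show 2 ^ (e + 1) - 1 = 2 ^ (e + 1) - 2 + 1 by omega, Nat.choose_succ_succ,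
    Nat.odd_add'] at h
  have h' := h.2 (even_choose_two_pow_sub_two e he)
  rwa [Nat.succ_eq_add_one, Nat.sub_add_cancel hN] at h'

lemma xT_eq_inj (k m s : ℕ) (i : Fin s) (j : Fin k) :
    xT k m s i j = inj (ZMod 2) s i (xGen k m j) := by
  rw [inj_apply]; rfl

/-- for `s ≥ 3` and `e ≥ 1`, in `R(2, 2^e-1)^{⊗s}` one has
`(z_{2,1}^{2^{e+1}-1} z_{2,2}^{2^{e+1}-2}) · (z_{3,1}^{2^e-1} z_{3,2}^{2^e+1}) ·
∏_{i=4}^{s} (z_{i,1}^{2^e} z_{i,2}^{2^e-1}) ≠ 0`. -/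
theorem statement17 (s e : ℕ) (hs : 3 ≤ s) (he : 1 ≤ e) :
    (zT 2 (2 ^ e - 1) s (by omega) ⟨1, by omega⟩ 0 ^ (2 ^ (e + 1) - 1) *
        zT 2 (2 ^ e - 1) s (by omega) ⟨1, by omega⟩ 1 ^ (2 ^ (e + 1) - 2)) *
      (zT 2 (2 ^ e - 1) s (by omega) ⟨2, by omega⟩ 0 ^ (2 ^ e - 1) *
        zT 2 (2 ^ e - 1) s (by omega) ⟨2, by omega⟩ 1 ^ (2 ^ e + 1)) *
      ∏ i ∈ Finset.univ.filter (fun i : Fin s => 3 ≤ i.val),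
        (zT 2 (2 ^ e - 1) s (by omega) i 0 ^ (2 ^ e) *
          zT 2 (2 ^ e - 1) s (by omega) i 1 ^ (2 ^ e - 1)) ≠ 0 := by
  obtain ⟨n, rfl⟩ : ∃ n, s = n + 2 + 1 := ⟨s - 3, by omega⟩
  have hN : 1 ≤ 2 ^ e := Nat.one_le_two_pow
  have hN2 : 2 ≤ 2 ^ e := by
    simpa using Nat.pow_le_pow_right (n := 2) (by norm_num) he
  have hdouble : 2 ^ (e + 1) = 2 * 2 ^ e := by ring
  have hfilter : Finset.univ.filter (fun i : Fin (n + 2 + 1) => 3 ≤ i.val) =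
      Finset.univ.map ((Fin.succEmb n).trans
        ((Fin.succEmb (n + 1)).trans (Fin.succEmb (n + 2)))) := by
    ext i
    simp only [Finset.mem_filter, Finset.mem_univ, true_and, Finset.mem_map]
    constructor
    · intro h
      exact ⟨⟨i.val - 3, by omega⟩, by ext; simp; omega⟩
    · rintro ⟨j, rfl⟩
      simp
  -- Exponents of `z_{i+2,1}` and `z_{i+2,2}`, for `i : Fin (n + 2)`.
  let p : Fin (n + 2) → ℕ := Fin.cons (2 ^ (e + 1) - 1) (Fin.cons (2 ^ e - 1) fun _ => 2 ^ e)
  let q : Fin (n + 2) → ℕ := Fin.cons (2 ^ (e + 1) - 2) (Fin.cons (2 ^ e + 1) fun _ => 2 ^ e - 1)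
  have hprod := tensorFunctional_prod (topClass (2 ^ e) hN) (n + 2)
    (fun i => Finset.range (p i + 1) ×ˢ Finset.range (q i + 1))
    (fun i k => ((p i).choose k.1 * (q i).choose k.2 : ℕ) •
      (xGen 2 (2 ^ e - 1) 0 ^ (p i - k.1) * xGen 2 (2 ^ e - 1) 1 ^ (q i - k.2)))
    (fun i k => xGen 2 (2 ^ e - 1) 0 ^ k.1 * xGen 2 (2 ^ e - 1) 1 ^ k.2)
  simp only [← add_pow_mul_add_pow, contracted_factor] at hprod
  have hcast : ∀ {c : ℕ}, Odd c → (c : ZMod 2) = 1 := fun h => ZMod.natCast_eq_one_iff_odd.2 h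
  have hcast0 : ∀ {c : ℕ}, Even c → (c : ZMod 2) = 0 := fun h => ZMod.natCast_eq_zero_iff_even.2 h
  intro h0
  have hLHS : ∏ i : Fin (n + 2),
      ((inj (ZMod 2) (n + 2 + 1) 0 (xGen 2 (2 ^ e - 1) 0) +
          inj (ZMod 2) (n + 2 + 1) i.succ (xGen 2 (2 ^ e - 1) 0)) ^ p i *
        (inj (ZMod 2) (n + 2 + 1) 0 (xGen 2 (2 ^ e - 1) 1) +
          inj (ZMod 2) (n + 2 + 1) i.succ (xGen 2 (2 ^ e - 1) 1)) ^ q i) = 0 := by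
    rw [← h0, hfilter, Finset.prod_map, Fin.prod_univ_succ, Fin.prod_univ_succ, ← mul_assoc]
    simp only [zT, xT_eq_inj]
    rfl
  rw [hLHS, map_zero, Fin.prod_univ_succ, Fin.prod_univ_succ] at hprod
  simp only [p, q, Fin.cons_zero, Fin.cons_succ] at hprod
  have hone : ((2 ^ e - 1).choose (2 ^ e)) = 0 := Nat.choose_eq_zero_of_lt (by omega)
  have c1 : (((2 ^ (e + 1) - 1).choose (2 ^ e) * (2 ^ (e + 1) - 2).choose (2 ^ e - 1) : ℕ) :
      ZMod 2) = 0 := hcast0 ((even_choose_two_pow_sub_two e he).mul_left _)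
  have c2 : (((2 ^ (e + 1) - 1).choose (2 ^ e - 1) * (2 ^ (e + 1) - 2).choose (2 ^ e) : ℕ) :
      ZMod 2) = 1 := hcast ((odd_choose_two_pow_sub_one _ _ (by omega)).mul
        (odd_choose_two_pow_sub_two e he))
  have c3 : (((2 ^ e - 1).choose (2 ^ e - 1) * (2 ^ e + 1).choose (2 ^ e) : ℕ) :
      ZMod 2) = 1 := by
    rw [Nat.choose_self, one_mul, Nat.choose_succ_self_right]
    exact hcast ((Nat.even_pow.2 ⟨even_two, by omega⟩).add_one)
  rw [c1, c2, c3] at hprod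
  -- The contractions are now `x ^ N * y ^ (N - 2)`, `y` and, for all later factors, `1`.
  simp only [hone, zero_mul, mul_zero, Nat.cast_zero, Nat.cast_one, zero_smul, one_smul,
    zero_add, add_zero, Nat.choose_self, mul_one, Nat.sub_self, pow_zero, Finset.prod_const_one] at hprod
  rw [show 2 ^ (e + 1) - 1 - (2 ^ e - 1) = 2 ^ e by omega,
    show 2 ^ e + 1 - 2 ^ e = 1 by omega, one_mul, mul_assoc, ← pow_add,
    show 2 ^ (e + 1) - 2 - 2 ^ e + 1 = 2 ^ e - 1 by omega, topClass_monomial,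
    if_pos ⟨rfl, rfl⟩, if_neg (by omega)] at hprod
  simp at hprod
end
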